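/- In the composite setting with f = 𝓛 + r, for all k ≥ 0 the modified STM iterates satisfy A_k f(x_k) ≤ ψ_k(z_k) + δ₂ Σ_{j=0}^{k} A_j + δ₁ Σ_{j=1}^{k} α_j ‖x̃_j − z_{j−1}‖₂, where δ₁ = δ and δ₂ = δ²/(2L_f). -/

import Mathlib

open scoped RealInnerProductSpace

/-!
The function `ψ k` is `(1 + μ A_k)`-strongly convex, so it grows quadratically away from its
minimizer `z_k`, by at least `(1 + μ A_k) / 2 * ‖z_{k+1} - z_k‖ ^ 2` at `z_{k+1}`. The triangles
`x_k, z_k, z_{k+1}` and `x_k, xt_{k+1}, x_{k+1}` are similar with ratio `α_{k+1} / A_{k+1}`, so the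
equation defining `α_{k+1}` turns this growth into `A_{k+1} * L / 2 * ‖x_{k+1} - xt_{k+1}‖ ^ 2`,
exactly the quadratic term of the upper model of the objective at `xt_{k+1}`. The oracle enters only
through that upper model, at the cost `δ₂ * A_{k+1}`, and through a lower linear model at `x_k`,
whose error `δ₁ * A_k * ‖x_k - xt_{k+1}‖` equals `δ₁ * α_{k+1} * ‖xt_{k+1} - z_k‖`.
-/

section StrongConvexity

variable {E : Type*} [NormedAddCommGroup E]

section NormedSpace

variable [NormedSpace ℝ E] {s : Set E} {f g : E → ℝ} {m l c : ℝ}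

lemma strongConvexOn_add (hf : StrongConvexOn s m f) (hg : StrongConvexOn s l g) :
    StrongConvexOn s (m + l) (f + g) := by
  have hmodulus : (fun t : ℝ ↦ (m + l) / 2 * t ^ 2) =
      (fun t ↦ m / 2 * t ^ 2) + fun t ↦ l / 2 * t ^ 2 := by
    funext t
    simp only [Pi.add_apply]
    ring
  rw [StrongConvexOn, hmodulus]
  exact UniformConvexOn.add hf hg

lemma strongConvexOn_const_mul (hf : StrongConvexOn s m f) (hc : 0 ≤ c) :
    StrongConvexOn s (c * m) fun y ↦ c * f y := by
  refine ⟨hf.1, fun x hx y hy a b ha hb hab ↦ ?_⟩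
  have hscaled := mul_le_mul_of_nonneg_left (hf.2 hx hy ha hb hab) hc
  simp only [smul_eq_mul] at hscaled ⊢
  linarith

lemma add_modulus_norm_sub_le_of_isMinOn {ω : ℝ → ℝ} (hf : UniformConvexOn s ω f) {z y : E}
    (hmin : IsMinOn f s z) (hz : z ∈ s) (hy : y ∈ s) : f z + ω ‖y - z‖ ≤ f y := by
  have hsegment : ∀ t ∈ Set.Ioo (0 : ℝ) 1, f z + (1 - t) * ω ‖y - z‖ ≤ f y := by
    rintro t ⟨ht0, ht1⟩
    have hle : f z ≤ t • f y + (1 - t) • f z - t * (1 - t) * ω ‖y - z‖ :=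
      (hmin (hf.1 hy hz ht0.le (sub_nonneg.2 ht1.le) (by ring))).trans
        (hf.2 hy hz ht0.le (sub_nonneg.2 ht1.le) (by ring))
    simp only [smul_eq_mul] at hle
    exact le_of_mul_le_mul_left (by linarith) ht0
  have hcont : Continuous fun t : ℝ ↦ f z + (1 - t) * ω ‖y - z‖ := by fun_prop
  have hlim := (hcont.tendsto 0).mono_left (nhdsWithin_le_nhds (s := Set.Ioi 0))
  simpa only [sub_zero, one_mul] using
    le_of_tendsto hlim (Filter.eventually_of_mem (Ioo_mem_nhdsGT one_pos) hsegment)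

end NormedSpace

lemma strongConvexOn_mul_sq_norm_sub [InnerProductSpace ℝ E] {s : Set E} (hs : Convex ℝ s)
    (m : ℝ) (a : E) : StrongConvexOn s m fun y ↦ m / 2 * ‖y - a‖ ^ 2 := by
  rw [strongConvexOn_iff_convex]
  have haffine := ((innerₛₗ ℝ (-m • a)).convexOn hs).add_const (m / 2 * ‖a‖ ^ 2)
  refine haffine.congr fun y _ ↦ ?_
  simp only [Pi.add_apply, innerₛₗ_apply_apply, real_inner_smul_left, norm_sub_sq_real,
    real_inner_comm a y]
  ring

end StrongConvexity

section WeightedAverage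

variable {E : Type*} [AddCommGroup E] [Module ℝ E] {s : Set E} {x y : E} {a b : ℝ}

lemma inv_add_smul_add_mem (hs : Convex ℝ s) (hx : x ∈ s) (hy : y ∈ s) (ha : 0 ≤ a) (hb : 0 ≤ b)
    (hab : 0 < a + b) : (a + b)⁻¹ • (a • x + b • y) ∈ s := by
  simpa only [smul_add, smul_smul, div_eq_inv_mul] using convex_iff_div.1 hs hx hy ha hb hab

lemma add_mul_map_inv_add_smul_add_le {h : E → ℝ} (hh : ConvexOn ℝ s h) (hx : x ∈ s) (hy : y ∈ s)
    (ha : 0 ≤ a) (hb : 0 ≤ b) (hab : 0 < a + b) :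
    (a + b) * h ((a + b)⁻¹ • (a • x + b • y)) ≤ a * h x + b * h y := by
  have hle := (convexOn_iff_div.1 hh).2 hx hy ha hb hab
  simp only [div_eq_inv_mul, ← smul_smul, ← smul_add] at hle
  simpa only [smul_eq_mul, inv_mul_eq_div, le_div_iff₀' hab] using hle

end WeightedAverage

section Oracle

variable {E : Type*} [NormedAddCommGroup E] [InnerProductSpace ℝ E]

/-- A first-order oracle `g` for `φ` on `Q` with absolute error `δ₂` in the quadratic upper model
and an error `δ₁` per unit length in the linear lower model. For `δ₁ = δ₂ = 0` these are the
inequalities satisfied by the gradient of a convex `L`-smooth function. -/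
structure IsInexactOracle (Q : Set E) (φ : E → ℝ) (g : E → E) (L δ₁ δ₂ : ℝ) : Prop where
  lower : ∀ ⦃v⦄, v ∈ Q → ∀ ⦃w⦄, w ∈ Q → φ v + ⟪g v, w - v⟫ ≤ φ w + δ₁ * ‖w - v‖
  upper : ∀ ⦃v⦄, v ∈ Q → ∀ ⦃w⦄, w ∈ Q → φ w ≤ φ v + ⟪g v, w - v⟫ + L / 2 * ‖w - v‖ ^ 2 + δ₂

lemma abs_inner_sub_inner_le_of_norm_sub_le {g g' u : E} {δ : ℝ} (hg : ‖g - g'‖ ≤ δ) :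
    |⟪g, u⟫ - ⟪g', u⟫| ≤ δ * ‖u‖ := by
  rw [← inner_sub_left]
  exact (abs_real_inner_le_norm _ _).trans (mul_le_mul_of_nonneg_right hg (norm_nonneg u))

variable [CompleteSpace E] {Q : Set E} {φ : E → ℝ} {φ' : E → E} {K : ℝ}

lemma hasDerivWithinAt_comp_add_smul_sub {v w : E} (hQ : StarConvex ℝ v Q) (hw : w ∈ Q)
    (hgrad : ∀ u ∈ Q, HasGradientWithinAt φ (φ' u) Q u) {t : ℝ} (ht : t ∈ Set.Icc (0 : ℝ) 1) :
    HasDerivWithinAt (fun s : ℝ ↦ φ (v + s • (w - v))) ⟪φ' (v + t • (w - v)), w - v⟫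
      (Set.Icc 0 1) t := by
  have hmaps : Set.MapsTo (fun s : ℝ ↦ v + s • (w - v)) (Set.Icc 0 1) Q :=
    fun s hs ↦ hQ.add_smul_sub_mem hw hs.1 hs.2
  have hline : HasDerivWithinAt (fun s : ℝ ↦ v + s • (w - v)) (w - v) (Set.Icc 0 1) t := by
    simpa only [one_smul, id_eq] using ((hasDerivWithinAt_id t _).smul_const (w - v)).const_add v
  simpa only [Function.comp_def, InnerProductSpace.toDual_apply_apply] using
    (hgrad _ (hmaps ht)).hasFDerivWithinAt.comp_hasDerivWithinAt t hline hmaps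

lemma le_add_inner_add_sq_of_lipschitz_gradient {v w : E} (hQ : StarConvex ℝ v Q) (hw : w ∈ Q)
    (hgrad : ∀ u ∈ Q, HasGradientWithinAt φ (φ' u) Q u)
    (hlip : ∀ u ∈ Q, ‖φ' u - φ' v‖ ≤ K * ‖u - v‖) :
    φ w ≤ φ v + ⟪φ' v, w - v⟫ + K / 2 * ‖w - v‖ ^ 2 := by
  have hderiv := fun t (ht : t ∈ Set.Icc (0 : ℝ) 1) ↦
    hasDerivWithinAt_comp_add_smul_sub hQ hw hgrad ht
  have hquad : ∀ t : ℝ, HasDerivAt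
      (fun s : ℝ ↦ φ v + s * ⟪φ' v, w - v⟫ + s ^ 2 * (K / 2 * ‖w - v‖ ^ 2))
      (⟪φ' v, w - v⟫ + t * (K * ‖w - v‖ ^ 2)) t := by
    intro t
    refine ((((hasDerivAt_id t).mul_const ⟪φ' v, w - v⟫).const_add (φ v)).add
      ((hasDerivAt_pow 2 t).mul_const (K / 2 * ‖w - v‖ ^ 2))).congr_deriv ?_
    simp only [Nat.cast_ofNat]
    ring
  have hslope : ∀ t ∈ Set.Ico (0 : ℝ) 1,
      ⟪φ' (v + t • (w - v)), w - v⟫ ≤ ⟪φ' v, w - v⟫ + t * (K * ‖w - v‖ ^ 2) := by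
    rintro t ⟨ht0, ht1⟩
    have hnorm := hlip _ (hQ.add_smul_sub_mem hw ht0 ht1.le)
    rw [add_sub_cancel_left, norm_smul, Real.norm_of_nonneg ht0] at hnorm
    linarith [(abs_le.1 (abs_inner_sub_inner_le_of_norm_sub_le (u := w - v) hnorm)).2]
  have hle := image_le_of_deriv_right_le_deriv_boundary (a := 0) (b := 1)
    (fun t ht ↦ (hderiv t ht).continuousWithinAt)
    (fun t ht ↦ (hderiv t (Set.Ico_subset_Icc_self ht)).mono_of_mem_nhdsWithin
      (Icc_mem_nhdsGE_of_mem ht))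
    (by simp) (fun t _ ↦ (hquad t).continuousAt.continuousWithinAt)
    (fun t _ ↦ (hquad t).hasDerivWithinAt) hslope (Set.right_mem_Icc.mpr zero_le_one)
  simpa using hle

lemma isInexactOracle_of_lipschitz_gradient {g : E → E} {δ : ℝ} (hQ : Convex ℝ Q) (hK : 0 < K)
    (hgrad : ∀ v ∈ Q, HasGradientWithinAt φ (φ' v) Q v)
    (hlip : ∀ v ∈ Q, ∀ w ∈ Q, ‖φ' v - φ' w‖ ≤ K * ‖v - w‖)
    (hconv : ∀ v ∈ Q, ∀ w ∈ Q, φ v + ⟪φ' v, w - v⟫ ≤ φ w)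
    (hg : ∀ v ∈ Q, ‖g v - φ' v‖ ≤ δ) :
    IsInexactOracle Q φ g (2 * K) δ (δ ^ 2 / (2 * K)) where
  lower v hv w hw := by
    have herror := (abs_le.1 (abs_inner_sub_inner_le_of_norm_sub_le (u := w - v) (hg v hv))).2
    linarith [hconv v hv w hw]
  upper v hv w hw := by
    have hdescent := le_add_inner_add_sq_of_lipschitz_gradient (hQ.starConvex hv) hw hgrad
      fun u hu ↦ hlip u hu v hv
    have herror := (abs_le.1 (abs_inner_sub_inner_le_of_norm_sub_le (u := w - v) (hg v hv))).1
    have hyoung : 2 * ‖w - v‖ * δ ≤ K * ‖w - v‖ ^ 2 + K⁻¹ * δ ^ 2 := two_mul_le_add_mul_sq hK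
    have hδ₂ : δ ^ 2 / (2 * K) = K⁻¹ * δ ^ 2 / 2 := by ring
    linarith

end Oracle

section SimilarTriangles

variable {E : Type*} [NormedAddCommGroup E] [InnerProductSpace ℝ E]

/-- The model of `φ + r` built at `a` from the oracle value `g a`: `φ` is replaced by its
linearization plus a quadratic of curvature `μ`, while the composite term `r` is kept exactly. -/
noncomputable def compositeModel (φ r : E → ℝ) (g : E → E) (μ : ℝ) (a y : E) : ℝ :=
  φ a + ⟪g a, y - a⟫ + μ / 2 * ‖y - a‖ ^ 2 + r y

lemma strongConvexOn_compositeModel {s : Set E} {r : E → ℝ} (hr : ConvexOn ℝ s r)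
    (φ : E → ℝ) (g : E → E) (μ : ℝ) (a : E) : StrongConvexOn s μ (compositeModel φ r g μ a) := by
  have haffine := ((innerₛₗ ℝ (g a)).convexOn hr.1).add_const (φ a - ⟪g a, a⟫)
  have hsum := strongConvexOn_add (strongConvexOn_mul_sq_norm_sub hr.1 μ a)
    (strongConvexOn_zero.2 (haffine.add hr))
  rw [add_zero] at hsum
  convert hsum using 1
  funext y
  simp only [compositeModel, Pi.add_apply, innerₛₗ_apply_apply, inner_sub_right]
  ring

/-- The sequences of the modified similar triangles method for `φ + r` on `Q` with oracle `g` and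
parameters `L` and `μ` (the paper's `μ_τ`); `xt k` stands for `x̃_k`. The minimizer of `ψ k` over
`Q` is recorded as a point `z k` with the minimizing property. -/
structure IsSimilarTriangles (Q : Set E) (φ r : E → ℝ) (g : E → E) (L μ : ℝ) (α A : ℕ → ℝ)
    (xt x z : ℕ → E) (ψ : ℕ → E → ℝ) : Prop where
  L_pos : 0 < L
  μ_nonneg : 0 ≤ μ
  xt_zero_mem : xt 0 ∈ Q
  α_zero : α 0 = 1 / L
  A_zero : A 0 = 1 / L
  ψ_zero : ∀ y, ψ 0 y = 1 / 2 * ‖y - xt 0‖ ^ 2 + α 0 * compositeModel φ r g μ (xt 0) y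
  z_mem : ∀ k, z k ∈ Q
  isMinOn_z : ∀ k, IsMinOn (ψ k) Q (z k)
  x_zero : x 0 = z 0
  α_succ_pos : ∀ k, 0 < α (k + 1)
  α_succ_eq : ∀ k, (1 + μ * A k) * (A k + α (k + 1)) = L * α (k + 1) ^ 2
  A_succ : ∀ k, A (k + 1) = A k + α (k + 1)
  xt_succ : ∀ k, xt (k + 1) = (A (k + 1))⁻¹ • (A k • x k + α (k + 1) • z k)
  ψ_succ : ∀ k y, ψ (k + 1) y = ψ k y + α (k + 1) * compositeModel φ r g μ (xt (k + 1)) y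
  x_succ : ∀ k, x (k + 1) = (A (k + 1))⁻¹ • (A k • x k + α (k + 1) • z (k + 1))

namespace IsSimilarTriangles

variable {Q : Set E} {φ r : E → ℝ} {g : E → E} {L μ δ₁ δ₂ : ℝ} {α A : ℕ → ℝ} {xt x z : ℕ → E}
  {ψ : ℕ → E → ℝ}

lemma A_pos (h : IsSimilarTriangles Q φ r g L μ α A xt x z ψ) (k : ℕ) : 0 < A k := by
  induction k with
  | zero => exact h.A_zero ▸ one_div_pos.2 h.L_pos
  | succ k ih => exact h.A_succ k ▸ add_pos ih (h.α_succ_pos k)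

lemma weightedAverage_mem (h : IsSimilarTriangles Q φ r g L μ α A xt x z ψ) (hQ : Convex ℝ Q)
    (k : ℕ) {u w : E} (hu : u ∈ Q) (hw : w ∈ Q) :
    (A (k + 1))⁻¹ • (A k • u + α (k + 1) • w) ∈ Q :=
  h.A_succ k ▸ inv_add_smul_add_mem hQ hu hw (h.A_pos k).le (h.α_succ_pos k).le
    (add_pos (h.A_pos k) (h.α_succ_pos k))

lemma x_mem (h : IsSimilarTriangles Q φ r g L μ α A xt x z ψ) (hQ : Convex ℝ Q) (k : ℕ) :
    x k ∈ Q := by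
  induction k with
  | zero => exact h.x_zero ▸ h.z_mem 0
  | succ k ih => exact h.x_succ k ▸ h.weightedAverage_mem hQ k ih (h.z_mem (k + 1))

lemma xt_succ_mem (h : IsSimilarTriangles Q φ r g L μ α A xt x z ψ) (hQ : Convex ℝ Q) (k : ℕ) :
    xt (k + 1) ∈ Q :=
  h.xt_succ k ▸ h.weightedAverage_mem hQ k (h.x_mem hQ k) (h.z_mem k)

lemma strongConvexOn_ψ (h : IsSimilarTriangles Q φ r g L μ α A xt x z ψ) (hr : ConvexOn ℝ Q r)
    (k : ℕ) : StrongConvexOn Q (1 + μ * A k) (ψ k) := by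
  induction k with
  | zero =>
    have hα : 0 ≤ α 0 := h.α_zero ▸ (one_div_pos.2 h.L_pos).le
    rw [funext h.ψ_zero, h.A_zero, ← h.α_zero, mul_comm μ]
    exact strongConvexOn_add (strongConvexOn_mul_sq_norm_sub hr.1 1 (xt 0))
      (strongConvexOn_const_mul (strongConvexOn_compositeModel hr φ g μ (xt 0)) hα)
  | succ k ih =>
    rw [funext (h.ψ_succ k), h.A_succ, mul_add, ← add_assoc, mul_comm μ (α (k + 1))]
    exact strongConvexOn_add ih (strongConvexOn_const_mul
      (strongConvexOn_compositeModel hr φ g μ (xt (k + 1))) (h.α_succ_pos k).le)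

lemma ψ_growth (h : IsSimilarTriangles Q φ r g L μ α A xt x z ψ) (hr : ConvexOn ℝ Q r) (k : ℕ) :
    ψ k (z k) + (1 + μ * A k) / 2 * ‖z (k + 1) - z k‖ ^ 2 ≤ ψ k (z (k + 1)) :=
  add_modulus_norm_sub_le_of_isMinOn (h.strongConvexOn_ψ hr k) (h.isMinOn_z k) (h.z_mem k)
    (h.z_mem (k + 1))

lemma A_smul_xt_succ (h : IsSimilarTriangles Q φ r g L μ α A xt x z ψ) (k : ℕ) :
    A (k + 1) • xt (k + 1) = A k • x k + α (k + 1) • z k := by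
  rw [h.xt_succ, smul_inv_smul₀ (h.A_pos (k + 1)).ne']

lemma A_smul_x_succ (h : IsSimilarTriangles Q φ r g L μ α A xt x z ψ) (k : ℕ) :
    A (k + 1) • x (k + 1) = A k • x k + α (k + 1) • z (k + 1) := by
  rw [h.x_succ, smul_inv_smul₀ (h.A_pos (k + 1)).ne']

lemma A_smul_x_succ_sub_xt_succ (h : IsSimilarTriangles Q φ r g L μ α A xt x z ψ) (k : ℕ) :
    A (k + 1) • (x (k + 1) - xt (k + 1)) = α (k + 1) • (z (k + 1) - z k) := by
  rw [smul_sub, h.A_smul_x_succ, h.A_smul_xt_succ, add_sub_add_left_eq_sub, smul_sub]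

lemma A_smul_x_sub_xt_succ (h : IsSimilarTriangles Q φ r g L μ α A xt x z ψ) (k : ℕ) :
    A k • (x k - xt (k + 1)) = α (k + 1) • (xt (k + 1) - z k) := by
  rw [smul_sub, smul_sub, sub_eq_sub_iff_add_eq_add, ← h.A_smul_xt_succ, h.A_succ, add_smul,
    add_comm]

lemma A_mul_norm_x_sub_xt_succ (h : IsSimilarTriangles Q φ r g L μ α A xt x z ψ) (k : ℕ) :
    A k * ‖x k - xt (k + 1)‖ = α (k + 1) * ‖xt (k + 1) - z k‖ := by
  simpa only [norm_smul, Real.norm_of_nonneg (h.A_pos k).le,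
    Real.norm_of_nonneg (h.α_succ_pos k).le] using congrArg norm (h.A_smul_x_sub_xt_succ k)

lemma A_mul_sq_norm_x_succ_sub_xt_succ (h : IsSimilarTriangles Q φ r g L μ α A xt x z ψ) (k : ℕ) :
    A (k + 1) * (L / 2 * ‖x (k + 1) - xt (k + 1)‖ ^ 2) =
      (1 + μ * A k) / 2 * ‖z (k + 1) - z k‖ ^ 2 := by
  have hsimilar : A (k + 1) * ‖x (k + 1) - xt (k + 1)‖ = α (k + 1) * ‖z (k + 1) - z k‖ := by
    simpa only [norm_smul, Real.norm_of_nonneg (h.A_pos (k + 1)).le,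
      Real.norm_of_nonneg (h.α_succ_pos k).le] using congrArg norm (h.A_smul_x_succ_sub_xt_succ k)
  have hα : (1 + μ * A k) * A (k + 1) = L * α (k + 1) ^ 2 := h.A_succ k ▸ h.α_succ_eq k
  refine mul_left_cancel₀ (h.A_pos (k + 1)).ne' ?_
  calc A (k + 1) * (A (k + 1) * (L / 2 * ‖x (k + 1) - xt (k + 1)‖ ^ 2))
      = L / 2 * (A (k + 1) * ‖x (k + 1) - xt (k + 1)‖) ^ 2 := by ring
    _ = L * α (k + 1) ^ 2 / 2 * ‖z (k + 1) - z k‖ ^ 2 := by rw [hsimilar]; ring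
    _ = A (k + 1) * ((1 + μ * A k) / 2 * ‖z (k + 1) - z k‖ ^ 2) := by rw [← hα]; ring

lemma A_mul_linearization_x_succ (h : IsSimilarTriangles Q φ r g L μ α A xt x z ψ) (c : ℝ) (v a : E)
    (k : ℕ) : A (k + 1) * (c + ⟪v, x (k + 1) - a⟫) =
      A k * (c + ⟪v, x k - a⟫) + α (k + 1) * (c + ⟪v, z (k + 1) - a⟫) := by
  have hinner := congrArg (fun u ↦ ⟪v, u⟫) (h.A_smul_x_succ k)
  simp only [inner_add_right, real_inner_smul_right] at hinner
  simp only [inner_sub_right]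
  linear_combination hinner + (c - ⟪v, a⟫) * h.A_succ k

lemma A_mul_r_x_succ_le (h : IsSimilarTriangles Q φ r g L μ α A xt x z ψ) (hr : ConvexOn ℝ Q r)
    (k : ℕ) : A (k + 1) * r (x (k + 1)) ≤ A k * r (x k) + α (k + 1) * r (z (k + 1)) := by
  rw [h.x_succ, h.A_succ]
  exact add_mul_map_inv_add_smul_add_le hr (h.x_mem hr.1 k) (h.z_mem (k + 1)) (h.A_pos k).le
    (h.α_succ_pos k).le (add_pos (h.A_pos k) (h.α_succ_pos k))

lemma A_mul_φ_x_succ_le (h : IsSimilarTriangles Q φ r g L μ α A xt x z ψ) (hQ : Convex ℝ Q)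
    (hg : IsInexactOracle Q φ g L δ₁ δ₂) (k : ℕ) :
    A (k + 1) * φ (x (k + 1)) ≤ A k * φ (x k) +
      α (k + 1) * (φ (xt (k + 1)) + ⟪g (xt (k + 1)), z (k + 1) - xt (k + 1)⟫) +
      (1 + μ * A k) / 2 * ‖z (k + 1) - z k‖ ^ 2 +
      δ₂ * A (k + 1) + δ₁ * (α (k + 1) * ‖xt (k + 1) - z k‖) := by
  have hxt := h.xt_succ_mem hQ k
  have hupper := mul_le_mul_of_nonneg_left (hg.upper hxt (h.x_mem hQ (k + 1))) (h.A_pos (k + 1)).le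
  have hlower := mul_le_mul_of_nonneg_left (hg.lower hxt (h.x_mem hQ k)) (h.A_pos k).le
  rw [mul_add, mul_add, h.A_mul_linearization_x_succ, h.A_mul_sq_norm_x_succ_sub_xt_succ] at hupper
  rw [mul_add (A k) (φ (x k)), mul_left_comm, h.A_mul_norm_x_sub_xt_succ] at hlower
  linarith

lemma A_zero_mul_objective_x_zero_le (h : IsSimilarTriangles Q φ r g L μ α A xt x z ψ)
    (hg : IsInexactOracle Q φ g L δ₁ δ₂) :
    A 0 * (φ (x 0) + r (x 0)) ≤ ψ 0 (z 0) + δ₂ * A 0 := by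
  have hA := (h.A_pos 0).le
  have hupper := mul_le_mul_of_nonneg_left (hg.upper h.xt_zero_mem (h.z_mem 0)) hA
  have hprox : A 0 * (L / 2 * ‖z 0 - xt 0‖ ^ 2) = 1 / 2 * ‖z 0 - xt 0‖ ^ 2 := by
    have hL := h.L_pos.ne'
    rw [h.A_zero]
    field_simp
  have hcurvature : 0 ≤ A 0 * (μ / 2 * ‖z 0 - xt 0‖ ^ 2) := by
    have hμ := h.μ_nonneg
    positivity
  rw [h.x_zero, h.ψ_zero, h.α_zero, ← h.A_zero, compositeModel]
  linarith

lemma A_mul_objective_x_succ_le (h : IsSimilarTriangles Q φ r g L μ α A xt x z ψ)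
    (hr : ConvexOn ℝ Q r) (hg : IsInexactOracle Q φ g L δ₁ δ₂) (k : ℕ) :
    A (k + 1) * (φ (x (k + 1)) + r (x (k + 1))) ≤
      A k * (φ (x k) + r (x k)) + (ψ (k + 1) (z (k + 1)) - ψ k (z k)) +
      δ₂ * A (k + 1) + δ₁ * (α (k + 1) * ‖xt (k + 1) - z k‖) := by
  have hcurvature : 0 ≤ α (k + 1) * (μ / 2 * ‖z (k + 1) - xt (k + 1)‖ ^ 2) := by
    have hμ := h.μ_nonneg
    have hα := h.α_succ_pos k
    positivity
  have hφ := h.A_mul_φ_x_succ_le hr.1 hg k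
  have hr_le := h.A_mul_r_x_succ_le hr k
  have hgrowth := h.ψ_growth hr k
  rw [h.ψ_succ, compositeModel]
  linarith

end IsSimilarTriangles

theorem stmt_18_general {Q : Set E} {φ r : E → ℝ} {g : E → E} {L μ δ₁ δ₂ : ℝ} {α A : ℕ → ℝ}
    {xt x z : ℕ → E} {ψ : ℕ → E → ℝ} (hr : ConvexOn ℝ Q r) (hg : IsInexactOracle Q φ g L δ₁ δ₂)
    (h : IsSimilarTriangles Q φ r g L μ α A xt x z ψ) (k : ℕ) :
    A k * (φ (x k) + r (x k)) ≤ ψ k (z k) + δ₂ * ∑ j ∈ Finset.range (k + 1), A j +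
      δ₁ * ∑ j ∈ Finset.range k, α (j + 1) * ‖xt (j + 1) - z j‖ := by
  induction k with
  | zero => simpa using h.A_zero_mul_objective_x_zero_le hg
  | succ k ih =>
    rw [Finset.sum_range_succ _ (k + 1),
      Finset.sum_range_succ (fun j ↦ α (j + 1) * ‖xt (j + 1) - z j‖) k]
    linarith [h.A_mul_objective_x_succ_le hr hg k]

end SimilarTriangles

/-- Proposition 6.5: per-iterate estimate of the modified STM in the composite
setting `f = 𝓛 + r`, with `L = 2 L_f`, `μ_τ = μ`, `δ₁ = δ`, `δ₂ = δ²/(2 L_f)`. -/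
theorem stmt_18 {n : ℕ} (Q : Set (EuclideanSpace ℝ (Fin n)))
    (hQclosed : IsClosed Q) (hQconvex : Convex ℝ Q)
    (Lc r : EuclideanSpace ℝ (Fin n) → ℝ)
    (hr : ConvexOn ℝ Set.univ r)
    (Lc' gt : EuclideanSpace ℝ (Fin n) → EuclideanSpace ℝ (Fin n))
    (Lf μ δ : ℝ) (hLf : 0 < Lf) (hμ : 0 ≤ μ) (hδ : 0 ≤ δ)
    (hgrad : ∀ v ∈ Q, HasGradientAt Lc (Lc' v) v)
    (hsmooth : ∀ v ∈ Q, ∀ w ∈ Q, ‖Lc' v - Lc' w‖ ≤ Lf * ‖v - w‖)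
    (hsc : ∀ v ∈ Q, ∀ w ∈ Q,
      Lc v + ⟪Lc' v, w - v⟫ + μ / 2 * ‖v - w‖ ^ 2 ≤ Lc w)
    (horacle : ∀ v ∈ Q, ‖gt v - Lc' v‖ ≤ δ)
    (f : EuclideanSpace ℝ (Fin n) → ℝ) (hf : ∀ v, f v = Lc v + r v)
    (α A : ℕ → ℝ) (xt x z : ℕ → EuclideanSpace ℝ (Fin n))
    (ψ : ℕ → EuclideanSpace ℝ (Fin n) → ℝ)
    (hxt0 : xt 0 ∈ Q) (hα0 : α 0 = 1 / (2 * Lf)) (hA0 : A 0 = 1 / (2 * Lf))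
    (hψ0 : ∀ y, ψ 0 y = 1 / 2 * ‖y - xt 0‖ ^ 2 +
      α 0 * (Lc (xt 0) + ⟪gt (xt 0), y - xt 0⟫ + μ / 2 * ‖y - xt 0‖ ^ 2 + r y))
    (hzmem : ∀ k, z k ∈ Q) (hzmin : ∀ k, ∀ y ∈ Q, ψ k (z k) ≤ ψ k y)
    (hx0 : x 0 = z 0)
    (hαpos : ∀ k, 0 < α (k + 1))
    (hαeq : ∀ k, (1 + μ * A k) * (A k + α (k + 1)) = 2 * Lf * α (k + 1) ^ 2)
    (hA : ∀ k, A (k + 1) = A k + α (k + 1))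
    (hxt : ∀ k, xt (k + 1) = (A (k + 1))⁻¹ • (A k • x k + α (k + 1) • z k))
    (hψ : ∀ k y, ψ (k + 1) y = ψ k y + α (k + 1) *
      (Lc (xt (k + 1)) + ⟪gt (xt (k + 1)), y - xt (k + 1)⟫ +
        μ / 2 * ‖y - xt (k + 1)‖ ^ 2 + r y))
    (hx : ∀ k, x (k + 1) = (A (k + 1))⁻¹ • (A k • x k + α (k + 1) • z (k + 1))) :
    ∀ k : ℕ, A k * f (x k) ≤ ψ k (z k) +
      δ ^ 2 / (2 * Lf) * ∑ j ∈ Finset.range (k + 1), A j +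
      δ * ∑ j ∈ Finset.range k, α (j + 1) * ‖xt (j + 1) - z j‖ := by
  have hconv : ∀ v ∈ Q, ∀ w ∈ Q, Lc v + ⟪Lc' v, w - v⟫ ≤ Lc w := fun v hv w hw ↦
    (le_add_of_nonneg_right (by positivity)).trans (hsc v hv w hw)
  have hg := isInexactOracle_of_lipschitz_gradient hQconvex hLf
    (fun v hv ↦ (hgrad v hv).hasFDerivAt.hasFDerivWithinAt) hsmooth hconv horacle
  simpa only [hf] using stmt_18_general (hr.subset (Set.subset_univ Q) hQconvex) hg
    ⟨by positivity, hμ, hxt0, hα0, hA0, hψ0, hzmem, fun k ↦ isMinOn_iff.2 (hzmin k), hx0, hαpos,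
      hαeq, hA, hxt, hψ, hx⟩
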